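/- Let p ≥ 6, u = 2^(1−p), and let o_x, o_y ∈ [1, 1/(8u) − 2]. Let x_h, x_l, y_h, y_l ∈ F_p satisfy |x_l| ≤ o_x·u·|x_h| and |y_l| ≤ o_y·u·|y_h|, and let S = x_h + x_l + y_h + y_l. If sloppy double-word addition is executed with R = RD at every operation, then z_h + z_l ≤ S; if it is executed with R = RU at every operation, then z_h + z_l ≥ S. (The sign of the error is consistent with the rounding direction, even in the presence of moderate input overlap.) -/

import Mathlib

/-- The radix-2, precision-`p` floating-point numbers with unlimited exponent range. -/
def Fp (p : ℕ) : Set ℝ := {x : ℝ | ∃ M e : ℤ, |M| ≤ 2 ^ p - 1 ∧ x = (M : ℝ) * (2 : ℝ) ^ e}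

/-- Round toward `-∞`: the largest floating-point number `≤ x`. -/
noncomputable def RD (p : ℕ) (x : ℝ) : ℝ := sSup {f : ℝ | f ∈ Fp p ∧ f ≤ x}

/-- Round toward `+∞`: the smallest floating-point number `≥ x`. -/
noncomputable def RU (p : ℕ) (x : ℝ) : ℝ := sInf {f : ℝ | f ∈ Fp p ∧ x ≤ f}

/-- `y` is a faithful rounding of `x`. -/
def Faithful (p : ℕ) (x y : ℝ) : Prop := y = RD p x ∨ y = RU p x

/-- Sloppy double-word addition with rounding function `R`. -/
noncomputable def sloppyAdd (R : ℝ → ℝ) (xh xl yh yl : ℝ) : ℝ × ℝ :=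
  let sh := R (xh + yh)
  let a' := R (sh - yh)
  let b' := R (sh - a')
  let sl := R (R (xh - a') + R (yh - b'))
  let v := R (xl + yl)
  let w := R (sl + v)
  let zh := R (sh + w)
  let d := R (zh - sh)
  let zl := R (w - d)
  (zh, zl)

/-!
The claim for `RU` is the mirror image of the claim for `RD`, since `RU x = -RD (-x)`. For `RD`,
every operation errs downward, so the total error has the right sign as soon as the two intermediate
results that are later subtracted, `b' = s_h - a'` and `d = z_h - s_h`, are computed without error.

Exactness comes from a directed form of the Fast2Sum lemma: if `a` is a multiple of `2 ^ k`, `b` is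
a floating-point number with `|b| < 2 ^ (p + k)`, and `|a + b| < 2 ^ (p + k + 1)`, then
`RD (a + b) - a` is a floating-point number. It applies to `b'` when `|x_h| ≤ |y_h|` or
`|y_h| ≤ |x_h + y_h|`; otherwise `x_h + y_h` is itself representable. For `d` there are two cases.

* If `|x_h + y_h|` is at least `|x_h|` or `|y_h|`, relative error bounds give `|w| ≤ |s_h|`.
* Otherwise the sum of the high parts cancels: `s_h = x_h + y_h`, `s_l = 0`, and `w` is the rounding
  of `x_l + y_l`. Now `w` may well exceed `s_h`, but it is small compared with the common grid
  `2 ^ k ℤ` of `x_h` and `y_h`, which is what the Fast2Sum lemma needs.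
-/

section Grid

/-- The fixed-point numbers `2 ^ k ℤ`, as a subgroup because they are added and subtracted. -/
noncomputable def grid (k : ℤ) : AddSubgroup ℝ := AddSubgroup.zmultiples ((2 : ℝ) ^ k)

/-- The largest element of `grid k` that does not exceed `t`. -/
noncomputable def gridFloor (k : ℤ) (t : ℝ) : ℝ := ⌊t / 2 ^ k⌋ * 2 ^ k

variable {k n : ℤ} {x y t : ℝ}

lemma mem_grid : x ∈ grid k ↔ ∃ N : ℤ, x = N * 2 ^ k := by
  simp only [grid, AddSubgroup.mem_zmultiples_iff, zsmul_eq_mul, eq_comm]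

lemma zpow_mem_grid (h : k ≤ n) : (2 : ℝ) ^ n ∈ grid k := by
  obtain ⟨c, rfl⟩ := Int.le.dest h
  refine mem_grid.2 ⟨2 ^ c, ?_⟩
  rw [zpow_add₀ two_ne_zero, zpow_natCast]
  push_cast
  ring

lemma grid_anti (h : k ≤ n) : grid n ≤ grid k :=
  AddSubgroup.zmultiples_le_of_mem (zpow_mem_grid h)

lemma pow_mul_zpow_mem_grid (p : ℕ) (k : ℤ) : (2 : ℝ) ^ p * 2 ^ k ∈ grid k :=
  mem_grid.2 ⟨2 ^ p, by push_cast; rfl⟩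

lemma abs_mem_grid (hx : x ∈ grid k) : |x| ∈ grid k := by
  rcases abs_choice x with h | h <;> rw [h]
  exacts [hx, neg_mem hx]

lemma le_of_lt_add_zpow (hx : x ∈ grid k) (hy : y ∈ grid k) (h : x < y + 2 ^ k) : x ≤ y := by
  obtain ⟨M, rfl⟩ := mem_grid.1 hx
  obtain ⟨N, rfl⟩ := mem_grid.1 hy
  have hMN : (M : ℝ) < N + 1 := lt_of_mul_lt_mul_right (by linarith) (zpow_nonneg two_pos.le k)
  have : (M : ℝ) ≤ N := by exact_mod_cast Int.lt_add_one_iff.1 (by exact_mod_cast hMN)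
  gcongr

lemma gridFloor_mem_grid (k : ℤ) (t : ℝ) : gridFloor k t ∈ grid k :=
  mem_grid.2 ⟨_, rfl⟩

lemma gridFloor_le (k : ℤ) (t : ℝ) : gridFloor k t ≤ t :=
  (le_div_iff₀ (by positivity)).1 (Int.floor_le _)

lemma sub_gridFloor_lt (k : ℤ) (t : ℝ) : t - gridFloor k t < 2 ^ k := by
  have := (div_lt_iff₀ (by positivity)).1 (Int.lt_floor_add_one (t / 2 ^ k))
  rw [gridFloor]
  linarith

lemma le_gridFloor (hx : x ∈ grid k) (h : x ≤ t) : x ≤ gridFloor k t :=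
  le_of_lt_add_zpow hx (gridFloor_mem_grid k t) (by linarith [sub_gridFloor_lt k t])

end Grid

section Fp

variable {p : ℕ} {k : ℤ} {x y : ℝ}

lemma mem_Fp_iff_exists_grid : x ∈ Fp p ↔ ∃ k, x ∈ grid k ∧ |x| ≤ (2 ^ p - 1) * 2 ^ k := by
  have abs_le_iff (M e : ℤ) : |M| ≤ 2 ^ p - 1 ↔ |(M : ℝ) * 2 ^ e| ≤ (2 ^ p - 1) * 2 ^ e := by
    rw [abs_mul, abs_of_pos (by positivity : (0 : ℝ) < 2 ^ e),
      mul_le_mul_iff_left₀ (by positivity)]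
    exact_mod_cast Iff.rfl
  constructor
  · rintro ⟨M, e, hM, rfl⟩
    exact ⟨e, mem_grid.2 ⟨M, rfl⟩, (abs_le_iff M e).1 hM⟩
  · rintro ⟨e, hx, hxe⟩
    obtain ⟨M, rfl⟩ := mem_grid.1 hx
    exact ⟨M, e, (abs_le_iff M e).2 hxe, rfl⟩

lemma neg_mem_Fp (hx : x ∈ Fp p) : -x ∈ Fp p := by
  rw [mem_Fp_iff_exists_grid] at hx ⊢
  simpa only [neg_mem_iff, abs_neg] using hx

lemma abs_mem_Fp (hx : x ∈ Fp p) : |x| ∈ Fp p := by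
  rcases abs_choice x with h | h <;> rw [h]
  exacts [hx, neg_mem_Fp hx]

lemma zero_mem_Fp (p : ℕ) : (0 : ℝ) ∈ Fp p :=
  ⟨0, 0, by simpa using one_le_pow₀ (n := p) (by norm_num : (1 : ℤ) ≤ 2), by simp⟩

lemma mem_grid_of_le_abs (hx : x ∈ Fp p) (h : 2 ^ p * 2 ^ k ≤ 2 * |x|) : x ∈ grid k := by
  obtain ⟨e, hxe, habs⟩ := mem_Fp_iff_exists_grid.1 hx
  refine grid_anti (not_lt.1 fun hek => h.not_gt ?_) hxe
  calc 2 * |x| ≤ 2 * ((2 ^ p - 1) * 2 ^ e) := by gcongr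
    _ < 2 ^ p * 2 ^ (e + 1) := by
      rw [zpow_add_one₀ two_ne_zero]
      linarith [zpow_pos (two_pos (α := ℝ)) e]
    _ ≤ 2 ^ p * 2 ^ k := by gcongr; exacts [one_le_two, hek]

lemma exists_grid_of_abs_add_le_min (hx : x ∈ Fp p) (hy : y ∈ Fp p)
    (h : |x + y| ≤ min |x| |y|) :
    ∃ k, x + y ∈ grid k ∧ |x + y| ≤ (2 ^ p - 1) * 2 ^ k ∧
      |x| + |y| ≤ 3 * ((2 ^ p - 1) * 2 ^ k) := by
  obtain ⟨i, hxi, hxabs⟩ := mem_Fp_iff_exists_grid.1 hx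
  obtain ⟨j, hyj, hyabs⟩ := mem_Fp_iff_exists_grid.1 hy
  obtain ⟨hx', hy'⟩ := le_min_iff.1 h
  have hxy : |x| ≤ |x + y| + |y| := by simpa using abs_sub (x + y) y
  have hyx : |y| ≤ |x + y| + |x| := by simpa using abs_sub (x + y) x
  rcases le_total i j with hij | hji
  · exact ⟨i, add_mem hxi (grid_anti hij hyj), by linarith, by linarith⟩
  · exact ⟨j, add_mem (grid_anti hji hxi) hyj, by linarith, by linarith⟩

lemma add_mem_Fp_of_abs_add_le_min (hx : x ∈ Fp p) (hy : y ∈ Fp p)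
    (h : |x + y| ≤ min |x| |y|) : x + y ∈ Fp p := by
  obtain ⟨k, hk, habs, -⟩ := exists_grid_of_abs_add_le_min hx hy h
  exact mem_Fp_iff_exists_grid.2 ⟨k, hk, habs⟩

lemma two_le_two_pow (p : ℕ) [NeZero p] : (2 : ℝ) ≤ 2 ^ p :=
  le_self_pow₀ one_le_two (NeZero.ne p)

lemma mem_Fp_of_mem_grid [NeZero p] (hx : x ∈ grid k) (h : |x| ≤ 2 ^ p * 2 ^ k) : x ∈ Fp p := by
  have hp := two_le_two_pow p
  rcases h.lt_or_eq with hlt | heq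
  · refine mem_Fp_iff_exists_grid.2 ⟨k, hx, ?_⟩
    rw [sub_one_mul]
    exact le_of_lt_add_zpow (abs_mem_grid hx)
      (sub_mem (pow_mul_zpow_mem_grid p k) (zpow_mem_grid le_rfl)) (by linarith)
  · rw [← zpow_natCast, ← zpow_add₀ two_ne_zero] at heq
    refine mem_Fp_iff_exists_grid.2 ⟨p + k, ?_, ?_⟩
    · rw [← abs_mem_iff, heq]
      exact zpow_mem_grid le_rfl
    · rw [heq]
      exact le_mul_of_one_le_left (by positivity) (by linarith)

end Fp

section RD

/-- The exponent of the unit in the last place of `t` at precision `p`, that is, the `n` with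
`2 ^ (p - 1 + n) ≤ |t| < 2 ^ (p + n)`. For `t = 0` it takes the junk value `1 - p`. -/
noncomputable def ulpExp (p : ℕ) (t : ℝ) : ℤ := Int.log 2 |t| + 1 - p

lemma two_pow_mul_zpow_ulpExp (p : ℕ) (t : ℝ) :
    (2 : ℝ) ^ p * 2 ^ ulpExp p t = 2 * 2 ^ Int.log 2 |t| := by
  rw [ulpExp, ← zpow_natCast, ← zpow_add₀ two_ne_zero, ← zpow_one_add₀ two_ne_zero]
  congr 1
  ring

lemma abs_lt_two_pow_mul_zpow_ulpExp (p : ℕ) (t : ℝ) : |t| < 2 ^ p * 2 ^ ulpExp p t := by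
  rw [two_pow_mul_zpow_ulpExp, ← zpow_one_add₀ two_ne_zero, add_comm]
  exact_mod_cast Int.lt_zpow_succ_log_self one_lt_two |t|

lemma two_pow_mul_zpow_ulpExp_le (p : ℕ) {t : ℝ} (ht : t ≠ 0) :
    2 ^ p * 2 ^ ulpExp p t ≤ 2 * |t| := by
  rw [two_pow_mul_zpow_ulpExp]
  gcongr
  exact_mod_cast Int.zpow_log_le_self one_lt_two (abs_pos.2 ht)

lemma ulpExp_le_of_abs_lt {p : ℕ} {k : ℤ} {t : ℝ} (ht : t ≠ 0) (h : |t| < 2 ^ p * 2 ^ k) :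
    ulpExp p t ≤ k := by
  have hlt : (2 : ℝ) ^ p * 2 ^ ulpExp p t < 2 ^ p * 2 ^ (k + 1) := by
    rw [zpow_add_one₀ two_ne_zero]
    linarith [two_pow_mul_zpow_ulpExp_le p ht]
  exact Int.lt_add_one_iff.1
    ((zpow_lt_zpow_iff_right₀ one_lt_two).1 (lt_of_mul_lt_mul_left hlt (by positivity)))

variable {p : ℕ} [NeZero p] {t f : ℝ}

lemma ulpExp_le_log (p : ℕ) [NeZero p] (t : ℝ) : ulpExp p t ≤ Int.log 2 |t| := by
  have := NeZero.pos p
  rw [ulpExp]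
  omega

lemma gridFloor_ulpExp_mem_Fp (p : ℕ) [NeZero p] (t : ℝ) : gridFloor (ulpExp p t) t ∈ Fp p := by
  obtain ⟨hlo, hhi⟩ := abs_lt.1 (abs_lt_two_pow_mul_zpow_ulpExp p t)
  refine mem_Fp_of_mem_grid (gridFloor_mem_grid _ t) (abs_le.2 ⟨?_, ?_⟩)
  · exact le_gridFloor (neg_mem (pow_mul_zpow_mem_grid p _)) hlo.le
  · exact (gridFloor_le _ t).trans hhi.le

lemma le_gridFloor_ulpExp (hf : f ∈ Fp p) (hft : f ≤ t) : f ≤ gridFloor (ulpExp p t) t := by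
  rcases eq_or_ne t 0 with rfl | ht
  · simpa [gridFloor] using hft
  rcases le_or_gt (2 ^ p * 2 ^ ulpExp p t) (2 * |f|) with h | h
  · exact le_gridFloor (mem_grid_of_le_abs hf h) hft
  -- `f` lies below the binade of `t`, whose least element `2 ^ Int.log 2 |t|` is on the grid
  have hbinade := two_pow_mul_zpow_ulpExp_le p ht
  have ht_pos : 0 < t := by
    by_contra! ht_nonpos
    linarith [neg_abs_le f, abs_of_nonpos ht_nonpos]
  rw [two_pow_mul_zpow_ulpExp, abs_of_pos ht_pos] at hbinade
  rw [two_pow_mul_zpow_ulpExp] at h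
  calc f ≤ |f| := le_abs_self f
    _ ≤ 2 ^ Int.log 2 |t| := by linarith
    _ ≤ gridFloor (ulpExp p t) t := by
      refine le_gridFloor (zpow_mem_grid (ulpExp_le_log p t)) ?_
      rw [abs_of_pos ht_pos]
      linarith

lemma isGreatest_gridFloor_ulpExp (p : ℕ) [NeZero p] (t : ℝ) :
    IsGreatest {f : ℝ | f ∈ Fp p ∧ f ≤ t} (gridFloor (ulpExp p t) t) :=
  ⟨⟨gridFloor_ulpExp_mem_Fp p t, gridFloor_le _ t⟩, fun _ hf => le_gridFloor_ulpExp hf.1 hf.2⟩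

lemma RD_eq_gridFloor (p : ℕ) [NeZero p] (t : ℝ) : RD p t = gridFloor (ulpExp p t) t :=
  (isGreatest_gridFloor_ulpExp p t).csSup_eq

lemma RD_mem_grid (p : ℕ) [NeZero p] (t : ℝ) : RD p t ∈ grid (ulpExp p t) :=
  RD_eq_gridFloor p t ▸ gridFloor_mem_grid _ t

lemma sub_RD_lt (p : ℕ) [NeZero p] (t : ℝ) : t - RD p t < 2 ^ ulpExp p t :=
  RD_eq_gridFloor p t ▸ sub_gridFloor_lt _ t

lemma RD_mem_Fp (p : ℕ) [NeZero p] (t : ℝ) : RD p t ∈ Fp p :=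
  RD_eq_gridFloor p t ▸ gridFloor_ulpExp_mem_Fp p t

lemma RD_le (p : ℕ) [NeZero p] (t : ℝ) : RD p t ≤ t :=
  RD_eq_gridFloor p t ▸ gridFloor_le _ t

lemma le_RD (hf : f ∈ Fp p) (h : f ≤ t) : f ≤ RD p t :=
  RD_eq_gridFloor p t ▸ le_gridFloor_ulpExp hf h

lemma RD_eq_self (ht : t ∈ Fp p) : RD p t = t :=
  le_antisymm (RD_le p t) (le_RD ht le_rfl)

lemma RD_zero (p : ℕ) [NeZero p] : RD p 0 = 0 := RD_eq_self (zero_mem_Fp p)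

lemma abs_RD_le (hf : f ∈ Fp p) (h : |t| ≤ f) : |RD p t| ≤ f := by
  rw [abs_le] at h ⊢
  exact ⟨le_RD (neg_mem_Fp hf) h.1, (RD_le p t).trans h.2⟩

lemma le_abs_RD (hf : f ∈ Fp p) (h : f ≤ |t|) : f ≤ |RD p t| := by
  rcases le_abs.1 h with h | h
  · exact (le_RD hf h).trans (le_abs_self _)
  · exact (le_neg.2 ((RD_le p t).trans (le_neg.1 h))).trans (neg_le_abs _)

lemma abs_sub_RD_le (p : ℕ) [NeZero p] (t : ℝ) : |t - RD p t| ≤ 2 ^ (1 - (p : ℤ)) * |t| := by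
  rcases eq_or_ne t 0 with rfl | ht
  · simp [RD_zero]
  have hulp := two_pow_mul_zpow_ulpExp_le p ht
  rw [abs_of_nonneg (sub_nonneg.2 (RD_le p t)), zpow_sub₀ two_ne_zero, zpow_one, zpow_natCast,
    div_mul_eq_mul_div, le_div_iff₀' (by positivity)]
  exact (mul_le_mul_of_nonneg_left (sub_RD_lt p t).le (by positivity)).trans hulp

end RD

lemma RU_eq_neg_RD_neg (p : ℕ) (x : ℝ) : RU p x = -RD p (-x) := by
  rw [RU, RD, ← Real.sInf_neg]
  congr 1
  ext f
  have neg_mem_iff : -f ∈ Fp p ↔ f ∈ Fp p := ⟨fun h => neg_neg f ▸ neg_mem_Fp h, neg_mem_Fp⟩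
  simp only [Set.mem_ofPred_eq, Set.mem_neg, neg_mem_iff, neg_le_neg_iff]

section Exactness

variable {p : ℕ} [NeZero p] {k : ℤ} {a b x y : ℝ}

lemma RD_add_sub_mem_Fp_of_mem_grid (ha : a ∈ grid k) (hb : b ∈ Fp p)
    (hbk : |b| ≤ (2 ^ p - 1) * 2 ^ k) (hab : |a + b| < 2 ^ p * 2 ^ (k + 1)) :
    RD p (a + b) - a ∈ Fp p := by
  rcases eq_or_ne (a + b) 0 with h0 | h0
  · rw [h0, RD_zero, zero_sub, neg_eq_of_add_eq_zero_right h0]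
    exact hb
  have hn := ulpExp_le_of_abs_lt h0 hab
  have habs := abs_lt_two_pow_mul_zpow_ulpExp p (a + b)
  have hz := RD_mem_grid p (a + b)
  have herr := sub_RD_lt p (a + b)
  have hle := RD_le p (a + b)
  set n := ulpExp p (a + b)
  obtain ⟨hb_lo, hb_hi⟩ := abs_le.1 hbk
  rcases hn.lt_or_eq with hnk | hnk
  · have han := grid_anti (Int.lt_add_one_iff.1 hnk) ha
    rcases le_or_gt (2 ^ p * 2 ^ n) (2 * |b|) with hnb | hbn
    · have hsum : a + b ∈ Fp p :=
        mem_Fp_of_mem_grid (add_mem han (mem_grid_of_le_abs hb hnb)) habs.le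
      rwa [RD_eq_self hsum, add_sub_cancel_left]
    · have hp : 2 * (2 : ℝ) ^ n ≤ 2 ^ p * 2 ^ n := by gcongr; exact two_le_two_pow p
      refine mem_Fp_of_mem_grid (sub_mem hz han) (abs_le.2 ⟨?_, ?_⟩) <;>
        linarith [neg_abs_le b, le_abs_self b]
  · rw [hnk] at hz
    rw [hnk, zpow_add_one₀ two_ne_zero] at herr
    have hdiff : RD p (a + b) - a ∈ grid k := sub_mem (grid_anti (by omega) hz) ha
    have hpos : (0 : ℝ) < 2 ^ k := by positivity
    -- the difference exceeds `-(2 ^ p + 1) * 2 ^ k`, which only leaves `-2 ^ p * 2 ^ k` on the grid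
    have hlo : -(2 ^ p * 2 ^ k) ≤ RD p (a + b) - a :=
      le_of_lt_add_zpow (neg_mem (pow_mul_zpow_mem_grid p k)) hdiff (by linarith)
    exact mem_Fp_of_mem_grid hdiff (abs_le.2 ⟨hlo, by linarith⟩)

lemma RD_add_sub_mem_Fp_of_abs_le (ha : a ∈ Fp p) (hb : b ∈ Fp p) (h : |b| ≤ |a|) :
    RD p (a + b) - a ∈ Fp p := by
  obtain ⟨k, hak, habs⟩ := mem_Fp_iff_exists_grid.1 ha
  refine RD_add_sub_mem_Fp_of_mem_grid hak hb (h.trans habs) ?_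
  rw [zpow_add_one₀ two_ne_zero]
  linarith [abs_add_le a b, zpow_pos (two_pos (α := ℝ)) k]

lemma RD_add_sub_RD_mem_Fp (hx : x ∈ Fp p) (hy : y ∈ Fp p) :
    RD p (x + y) - RD p (RD p (x + y) - y) ∈ Fp p := by
  rcases le_total |x| |y| with hxy | hyx
  · have ha' := RD_add_sub_mem_Fp_of_abs_le hy hx hxy
    rw [add_comm y x] at ha'
    rwa [RD_eq_self ha', sub_sub_cancel]
  rcases le_total |y| |x + y| with hy_le | hle_y
  · have hb' := RD_add_sub_mem_Fp_of_abs_le (RD_mem_Fp p (x + y)) (neg_mem_Fp hy)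
      (by rw [abs_neg]; exact le_abs_RD (abs_mem_Fp hy) hy_le)
    rw [← sub_eq_add_neg] at hb'
    simpa only [neg_sub] using neg_mem_Fp hb'
  · rw [RD_eq_self (add_mem_Fp_of_abs_add_le_min hx hy (le_min (hle_y.trans hyx) hle_y)),
      add_sub_cancel_right, RD_eq_self hx, add_sub_cancel_left]
    exact hy

end Exactness

section Sums

/-- The 2Sum algorithm with rounding function `R`: a rounded sum and an estimate of its error. -/
noncomputable def twoSum (R : ℝ → ℝ) (x y : ℝ) : ℝ × ℝ :=
  let s := R (x + y)
  let a' := R (s - y)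
  let b' := R (s - a')
  (s, R (R (x - a') + R (y - b')))

/-- The Fast2Sum algorithm with rounding function `R`: a cheaper 2Sum, meant for `|b| ≤ |a|`. -/
noncomputable def fastTwoSum (R : ℝ → ℝ) (a b : ℝ) : ℝ × ℝ :=
  let z := R (a + b)
  (z, R (b - R (z - a)))

lemma sloppyAdd_eq_fastTwoSum (R : ℝ → ℝ) (xh xl yh yl : ℝ) :
    sloppyAdd R xh xl yh yl =
      fastTwoSum R (twoSum R xh yh).1 (R ((twoSum R xh yh).2 + R (xl + yl))) :=
  rfl

lemma sloppyAdd_neg_comp_neg (R : ℝ → ℝ) (xh xl yh yl : ℝ) :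
    sloppyAdd (fun t => -R (-t)) xh xl yh yl = -sloppyAdd R (-xh) (-xl) (-yh) (-yl) := by
  have hadd (x y : ℝ) : -(x + y) = -x + -y := neg_add x y
  have hsub (x y : ℝ) : -(x - y) = -x - -y := by ring
  simp only [sloppyAdd, hadd, hsub, neg_neg, Prod.neg_mk]

lemma abs_le_of_abs_sub_le {u s t : ℝ} (h : |t - s| ≤ u * |t|) : |s| ≤ (1 + u) * |t| := by
  have := abs_sub t (t - s)
  rw [sub_sub_cancel] at this
  linarith

lemma abs_twoSum_snd_le {R : ℝ → ℝ} {u : ℝ} (hR : ∀ t, |t - R t| ≤ u * |t|) {x y : ℝ}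
    (hb : R (R (x + y) - R (R (x + y) - y)) = R (x + y) - R (R (x + y) - y)) :
    |(twoSum R x y).2| ≤ (1 + u) ^ 2 * (u * |x + y| + 2 * (u * (|x| + u * |x + y|))) := by
  simp only [twoSum, hb]
  set s := R (x + y)
  set a' := R (s - y)
  have hu : 0 ≤ u := by simpa using (abs_nonneg _).trans (hR 1)
  have hRle (t : ℝ) : |R t| ≤ (1 + u) * |t| := abs_le_of_abs_sub_le (hR t)
  have hs : |x + y - s| ≤ u * |x + y| := hR (x + y)
  have ha : |s - y - a'| ≤ u * (|x| + u * |x + y|) := by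
    refine (hR (s - y)).trans ?_
    gcongr
    calc |s - y| = |x - (x + y - s)| := by ring_nf
      _ ≤ |x| + |x + y - s| := abs_sub _ _
      _ ≤ |x| + u * |x + y| := by gcongr
  have hxa : |x - a'| ≤ u * |x + y| + u * (|x| + u * |x + y|) :=
    calc |x - a'| = |(x + y - s) + (s - y - a')| := by ring_nf
      _ ≤ |x + y - s| + |s - y - a'| := abs_add_le _ _
      _ ≤ _ := add_le_add hs ha
  have hyb : |y - (s - a')| ≤ u * (|x| + u * |x + y|) := by
    rwa [show y - (s - a') = -(s - y - a') by ring, abs_neg]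
  calc |R (R (x - a') + R (y - (s - a')))|
      ≤ (1 + u) * (|R (x - a')| + |R (y - (s - a'))|) :=
        (hRle _).trans (by gcongr; exact abs_add_le _ _)
    _ ≤ (1 + u) * ((1 + u) * |x - a'| + (1 + u) * |y - (s - a')|) := by
        gcongr <;> exact hRle _
    _ = (1 + u) ^ 2 * (|x - a'| + |y - (s - a')|) := by ring
    _ ≤ (1 + u) ^ 2 * (u * |x + y| + 2 * (u * (|x| + u * |x + y|))) := by
        refine mul_le_mul_of_nonneg_left ?_ (by positivity)
        linarith

variable {p : ℕ} [NeZero p] {x y a b : ℝ}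

lemma twoSum_RD_add_le (hx : x ∈ Fp p) (hy : y ∈ Fp p) :
    (twoSum (RD p) x y).1 + (twoSum (RD p) x y).2 ≤ x + y := by
  simp only [twoSum, RD_eq_self (RD_add_sub_RD_mem_Fp hx hy)]
  set s := RD p (x + y)
  set a' := RD p (s - y)
  linarith [RD_le p (RD p (x - a') + RD p (y - (s - a'))), RD_le p (x - a'),
    RD_le p (y - (s - a'))]

lemma twoSum_RD_of_abs_add_le_min (hx : x ∈ Fp p) (hy : y ∈ Fp p) (h : |x + y| ≤ min |x| |y|) :
    twoSum (RD p) x y = (x + y, 0) := by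
  simp only [twoSum, RD_eq_self (add_mem_Fp_of_abs_add_le_min hx hy h), add_sub_cancel_right,
    add_sub_cancel_left, RD_eq_self hx, RD_eq_self hy, sub_self, RD_zero, add_zero]

lemma fastTwoSum_RD_add_le (h : RD p (a + b) - a ∈ Fp p) :
    (fastTwoSum (RD p) a b).1 + (fastTwoSum (RD p) a b).2 ≤ a + b := by
  simp only [fastTwoSum, RD_eq_self h]
  linarith [RD_le p (b - (RD p (a + b) - a))]

end Sums

section SloppyAdd

variable {p : ℕ} {x y l xh xl yh yl : ℝ}

lemma zpow_one_sub_le (hp : 6 ≤ p) : (2 : ℝ) ^ (1 - (p : ℤ)) ≤ 1 / 32 :=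
  calc (2 : ℝ) ^ (1 - (p : ℤ)) ≤ 2 ^ (-5 : ℤ) := zpow_le_zpow_right₀ one_le_two (by omega)
    _ = 1 / 32 := by norm_num

lemma abs_sloppy_correction_le (hp : 6 ≤ p) (hx : x ∈ Fp p) (hy : y ∈ Fp p)
    (hxy : min |x| |y| ≤ |x + y|) (hl : |l| ≤ (|x| + |y|) / 4) :
    |RD p ((twoSum (RD p) x y).2 + RD p l)| ≤ |(twoSum (RD p) x y).1| := by
  have : NeZero p := ⟨by omega⟩
  have hRD (t : ℝ) : |t - RD p t| ≤ 1 / 32 * |t| :=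
    (abs_sub_RD_le p t).trans (by gcongr; exact zpow_one_sub_le hp)
  have hx_le : |x| ≤ |x + y| + |y| := by simpa using abs_sub (x + y) y
  have hy_le : |y| ≤ |x + y| + |x| := by simpa using abs_sub (x + y) x
  have hx_two : |x| ≤ 2 * |x + y| := by rcases min_le_iff.1 hxy with h | h <;> linarith
  have hsum_three : |x| + |y| ≤ 3 * |x + y| := by rcases min_le_iff.1 hxy with h | h <;> linarith
  have hsl := abs_twoSum_snd_le hRD (RD_eq_self (RD_add_sub_RD_mem_Fp hx hy))
  have hv : |RD p l| ≤ (1 + 1 / 32) * |l| := abs_le_of_abs_sub_le (hRD l)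
  have hsh : |x + y| ≤ |(twoSum (RD p) x y).1| + 1 / 32 * |x + y| := by
    have := abs_add_le (RD p (x + y)) (x + y - RD p (x + y))
    rw [add_sub_cancel] at this
    exact this.trans (add_le_add le_rfl (hRD _))
  refine abs_RD_le (abs_mem_Fp (RD_mem_Fp p (x + y))) ?_
  linarith [abs_add_le (twoSum (RD p) x y).2 (RD p l)]

lemma RD_add_sub_mem_Fp_of_cancel [NeZero p] (hx : x ∈ Fp p) (hy : y ∈ Fp p)
    (hxy : |x + y| ≤ min |x| |y|) (hl : |l| ≤ (|x| + |y|) / 3) :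
    RD p (x + y + RD p l) - (x + y) ∈ Fp p := by
  obtain ⟨k, hgrid, hsum, hbound⟩ := exists_grid_of_abs_add_le_min hx hy hxy
  have hF : (2 ^ p - 1) * (2 : ℝ) ^ k ∈ Fp p := 
    ⟨2 ^ p - 1, k, (abs_of_nonneg (sub_nonneg.2 (one_le_pow₀ one_le_two))).le, by push_cast; rfl⟩
  have hv : |RD p l| ≤ (2 ^ p - 1) * 2 ^ k := abs_RD_le hF (by linarith)
  refine RD_add_sub_mem_Fp_of_mem_grid hgrid (RD_mem_Fp p l) hv ?_
  rw [zpow_add_one₀ two_ne_zero]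
  linarith [abs_add_le (x + y) (RD p l), zpow_pos (two_pos (α := ℝ)) k]

lemma sloppy_fastTwoSum_exact (hp : 6 ≤ p) (hx : x ∈ Fp p) (hy : y ∈ Fp p)
    (hl : |l| ≤ (|x| + |y|) / 4) :
    RD p ((twoSum (RD p) x y).1 + RD p ((twoSum (RD p) x y).2 + RD p l))
      - (twoSum (RD p) x y).1 ∈ Fp p := by
  have : NeZero p := ⟨by omega⟩
  rcases le_total |x + y| (min |x| |y|) with hxy | hxy
  · rw [twoSum_RD_of_abs_add_le_min hx hy hxy]
    simp only [zero_add, RD_eq_self (RD_mem_Fp p l)]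
    exact RD_add_sub_mem_Fp_of_cancel hx hy hxy (by linarith [abs_nonneg x, abs_nonneg y])
  · exact RD_add_sub_mem_Fp_of_abs_le (RD_mem_Fp p (x + y)) (RD_mem_Fp p _)
      (abs_sloppy_correction_le hp hx hy hxy hl)

lemma sloppyAdd_RD_add_le (hp : 6 ≤ p) (hxh : xh ∈ Fp p) (hyh : yh ∈ Fp p)
    (hl : |xl + yl| ≤ (|xh| + |yh|) / 4) :
    (sloppyAdd (RD p) xh xl yh yl).1 + (sloppyAdd (RD p) xh xl yh yl).2 ≤ xh + xl + yh + yl := by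
  have : NeZero p := ⟨by omega⟩
  rw [sloppyAdd_eq_fastTwoSum]
  set s := twoSum (RD p) xh yh
  calc _ ≤ s.1 + RD p (s.2 + RD p (xl + yl)) :=
        fastTwoSum_RD_add_le (sloppy_fastTwoSum_exact hp hxh hyh hl)
    _ ≤ s.1 + (s.2 + (xl + yl)) := by
        gcongr
        exact (RD_le p _).trans (by gcongr; exact RD_le p _)
    _ ≤ xh + xl + yh + yl := by linarith [twoSum_RD_add_le hxh hyh]

lemma le_sloppyAdd_RU_add (hp : 6 ≤ p) (hxh : xh ∈ Fp p) (hyh : yh ∈ Fp p)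
    (hl : |xl + yl| ≤ (|xh| + |yh|) / 4) :
    xh + xl + yh + yl ≤ (sloppyAdd (RU p) xh xl yh yl).1 + (sloppyAdd (RU p) xh xl yh yl).2 := by
  have hneg := sloppyAdd_RD_add_le (xl := -xl) (yl := -yl) hp (neg_mem_Fp hxh) (neg_mem_Fp hyh)
    (by rwa [← neg_add, abs_neg, abs_neg, abs_neg])
  rw [funext (RU_eq_neg_RD_neg p), sloppyAdd_neg_comp_neg, Prod.fst_neg, Prod.snd_neg]
  linarith

lemma abs_le_div_eight_of_overlap {o u : ℝ} (hu : 0 < u) (ho : o ≤ 1 / (8 * u) - 2)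
    (h : |x| ≤ o * u * |y|) : |x| ≤ |y| / 8 := by
  have hou : o * u ≤ 1 / 8 :=
    calc o * u ≤ (1 / (8 * u) - 2) * u := by gcongr
      _ = 1 / 8 - 2 * u := by field_simp
      _ ≤ 1 / 8 := by linarith
  calc |x| ≤ o * u * |y| := h
    _ ≤ 1 / 8 * |y| := by gcongr
    _ = |y| / 8 := by ring

theorem sloppy_directed_rounding_error_sign_general (hp : 6 ≤ p)
    (hxh : xh ∈ Fp p) (hyh : yh ∈ Fp p) (hl : |xl + yl| ≤ (|xh| + |yh|) / 4) :
    (sloppyAdd (RD p) xh xl yh yl).1 + (sloppyAdd (RD p) xh xl yh yl).2 ≤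
        xh + xl + yh + yl ∧
      xh + xl + yh + yl ≤
        (sloppyAdd (RU p) xh xl yh yl).1 + (sloppyAdd (RU p) xh xl yh yl).2 :=
  ⟨sloppyAdd_RD_add_le hp hxh hyh hl, le_sloppyAdd_RU_add hp hxh hyh hl⟩

end SloppyAdd

theorem sloppy_directed_rounding_error_sign
    (p : ℕ) (hp : 6 ≤ p) (u : ℝ) (hu : u = (2 : ℝ) ^ (1 - (p : ℤ)))
    (ox oy : ℝ) (hox1 : 1 ≤ ox) (hox2 : ox ≤ 1 / (8 * u) - 2)
    (hoy1 : 1 ≤ oy) (hoy2 : oy ≤ 1 / (8 * u) - 2)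
    (xh xl yh yl : ℝ)
    (hxh : xh ∈ Fp p) (hxl : xl ∈ Fp p) (hyh : yh ∈ Fp p) (hyl : yl ∈ Fp p)
    (hovx : |xl| ≤ ox * u * |xh|) (hovy : |yl| ≤ oy * u * |yh|) :
    (sloppyAdd (RD p) xh xl yh yl).1 + (sloppyAdd (RD p) xh xl yh yl).2 ≤
        xh + xl + yh + yl ∧
      xh + xl + yh + yl ≤
        (sloppyAdd (RU p) xh xl yh yl).1 + (sloppyAdd (RU p) xh xl yh yl).2 := by
  have hu0 : 0 < u := hu ▸ by positivity
  have hx := abs_le_div_eight_of_overlap hu0 hox2 hovx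
  have hy := abs_le_div_eight_of_overlap hu0 hoy2 hovy
  exact sloppy_directed_rounding_error_sign_general hp hxh hyh
    (by linarith [abs_add_le xl yl, abs_nonneg xh, abs_nonneg yh])
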